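/- Let the compact set A and lower semicontinuous kernel K satisfy assumptions (A1)-(A4). If {ω_N*}_{N≥2} is any sequence of polarization-optimal configurations, i.e. P(ω_N*) = 𝒫(A,N) = sup_{ω_N ∈ A^N} P(ω_N) for each N, and ν_N* is the probability measure assigning mass 1/N to each point of ω_N* (counting multiplicities), then ν_N* converges weakly to μ_eq as N → ∞. -/

import Mathlib

open MeasureTheory Filter Topology BoundedContinuousFunction NNReal ENNReal

noncomputable section

/-- The potential of a measure `μ` with respect to the kernel `K x y = f (nndist x y)`. -/
def potential {t : ℕ} (f : ℝ≥0 → ℝ≥0∞) (μ : Measure (EuclideanSpace ℝ (Fin t)))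
    (x : EuclideanSpace ℝ (Fin t)) : ℝ≥0∞ :=
  ∫⁻ y, f (nndist x y) ∂μ

/-- The energy `I[μ] = ∫∫ K(x,y) dμ(x) dμ(y)`. -/
def energy {t : ℕ} (f : ℝ≥0 → ℝ≥0∞) (μ : Measure (EuclideanSpace ℝ (Fin t))) : ℝ≥0∞ :=
  ∫⁻ x, potential f μ x ∂μ

/-- The normalized discrete potential `(1/N) ∑_{y ∈ ω} K(x,y)` of a configuration. -/
def discretePotential {t : ℕ} (f : ℝ≥0 → ℝ≥0∞) {N : ℕ}
    (ω : Fin N → EuclideanSpace ℝ (Fin t)) (x : EuclideanSpace ℝ (Fin t)) : ℝ≥0∞ :=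
  (N : ℝ≥0∞)⁻¹ * ∑ i, f (nndist x (ω i))

/-- The polarization `P(ω) = min_{x ∈ A} (1/N) ∑_{y ∈ ω} K(x,y)` of a configuration. -/
def polarization {t : ℕ} (f : ℝ≥0 → ℝ≥0∞) (A : Set (EuclideanSpace ℝ (Fin t))) {N : ℕ}
    (ω : Fin N → EuclideanSpace ℝ (Fin t)) : ℝ≥0∞ :=
  ⨅ x ∈ A, discretePotential f ω x

/-- The optimal `N`-point polarization `𝒫(A,N)`. -/
def maxPolarization {t : ℕ} (f : ℝ≥0 → ℝ≥0∞) (A : Set (EuclideanSpace ℝ (Fin t)))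
    (N : ℕ) : ℝ≥0∞ :=
  ⨆ (ω : Fin N → EuclideanSpace ℝ (Fin t)) (_ : ∀ i, ω i ∈ A), polarization f A ω

/-- The normalized counting measure of a configuration. -/
def countingMeasure {t : ℕ} {N : ℕ} (ω : Fin N → EuclideanSpace ℝ (Fin t)) :
    Measure (EuclideanSpace ℝ (Fin t)) :=
  (N : ℝ≥0∞)⁻¹ • ∑ i, Measure.dirac (ω i)

/-- Weak convergence of a sequence of measures: integrals of every bounded continuous
function converge. -/
def WeaklyTendsto {t : ℕ} (ν : ℕ → Measure (EuclideanSpace ℝ (Fin t)))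
    (μ : Measure (EuclideanSpace ℝ (Fin t))) : Prop :=
  ∀ g : EuclideanSpace ℝ (Fin t) →ᵇ ℝ,
    Tendsto (fun N => ∫ x, g x ∂(ν N)) atTop (𝓝 (∫ x, g x ∂μ))

/-!
Every weak limit `ν` of configurations with polarization at least `W`, the constant value of
`U^μ` on `A`, has `U^ν ≤ W` on `supp μ`. Indeed `max W U^ν` is bounded by the lower limit of the
discrete potentials, whose integrals against `μ` are, by symmetry of the kernel, averages of `U^μ`
and hence equal to `W`; by Fatou's lemma `U^ν ≤ W` holds `μ`-almost everywhere, and by lower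
semicontinuity on all of `supp μ`. If `supp μ ⊇ A`, then `I[ν] ≤ W = I[μ]`, so `ν = μ` when `μ` is
the unique minimizer, and compactness turns this into convergence.

Optimal configurations do asymptotically have polarization at least `W`: the empirical measures of
independent points with law `μ` converge weakly to `μ` almost surely, and the polarization is lower
semicontinuous in the measure.
-/

section LowerSemicontinuity

theorem lowerSemicontinuous_biInf_of_isCompact {X Y γ : Type*} [TopologicalSpace X]
    [TopologicalSpace Y] [CompleteLinearOrder γ] [DenselyOrdered γ] {F : X × Y → γ}
    (hF : LowerSemicontinuous F) {A : Set Y} (hA : IsCompact A) :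
    LowerSemicontinuous fun x => ⨅ y ∈ A, F (x, y) := by
  intro x c hc
  obtain ⟨d, hcd, hd⟩ := exists_between hc
  filter_upwards [hA.eventually_forall_of_forall_eventually (P := fun x y => d < F (x, y))
    fun y hy => hF (x, y) d (hd.trans_le (iInf₂_le y hy))] with x' hx'
  exact hcd.trans_le (le_iInf₂ fun y hy => (hx' y hy).le)

theorem lowerSemicontinuous_lintegral {X α : Type*} [TopologicalSpace X]
    [FirstCountableTopology X] [MeasurableSpace α] {μ : Measure α} {F : X → α → ℝ≥0∞}
    (hmeas : ∀ x, Measurable (F x)) (hlsc : ∀ a, LowerSemicontinuous fun x => F x a) :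
    LowerSemicontinuous fun x => ∫⁻ a, F x a ∂μ :=
  lowerSemicontinuous_iff_le_liminf.2 fun x =>
    calc ∫⁻ a, F x a ∂μ ≤ ∫⁻ a, liminf (fun x' => F x' a) (𝓝 x) ∂μ :=
          lintegral_mono fun a => (hlsc a).le_liminf x
      _ ≤ liminf (fun x' => ∫⁻ a, F x' a ∂μ) (𝓝 x) := lintegral_liminf_le hmeas

theorem volume_Ioi_inter_ofReal_lt (a : ℝ≥0∞) :
    volume.restrict (Set.Ioi (0 : ℝ)) {t | ENNReal.ofReal t < a} = a := by
  rw [Measure.restrict_apply (measurableSet_lt ENNReal.measurable_ofReal measurable_const)]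
  induction a with
  | top => simp
  | coe a =>
    have : {t : ℝ | ENNReal.ofReal t < a} ∩ Set.Ioi 0 = Set.Ioo 0 (a : ℝ) := by
      ext t
      simp only [Set.mem_inter_iff, Set.mem_ofPred_eq, Set.mem_Ioi, Set.mem_Ioo]
      rw [and_comm, and_congr_right_iff]
      intro ht
      rw [← ENNReal.ofReal_coe_nnreal, ENNReal.ofReal_lt_ofReal_iff_of_nonneg ht.le]
    rw [this, Real.volume_Ioo, sub_zero, ENNReal.ofReal_coe_nnreal]

theorem lintegral_eq_lintegral_Ioi_measure_ofReal_lt {α : Type*} [MeasurableSpace α]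
    (μ : Measure α) [SFinite μ] {f : α → ℝ≥0∞} (hf : Measurable f) :
    ∫⁻ x, f x ∂μ = ∫⁻ t in Set.Ioi 0, μ {x | ENNReal.ofReal t < f x} := by
  have hS : MeasurableSet {p : α × ℝ | ENNReal.ofReal p.2 < f p.1} :=
    measurableSet_lt (by fun_prop) (by fun_prop)
  calc ∫⁻ x, f x ∂μ
      = (μ.prod (volume.restrict (Set.Ioi 0))) {p : α × ℝ | ENNReal.ofReal p.2 < f p.1} := by
        rw [Measure.prod_apply hS]
        exact lintegral_congr fun x => (volume_Ioi_inter_ofReal_lt (f x)).symm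
    _ = ∫⁻ t in Set.Ioi 0, μ {x | ENNReal.ofReal t < f x} := Measure.prod_apply_symm hS

theorem lowerSemicontinuous_lintegral_probabilityMeasure {X : Type*} [TopologicalSpace X]
    [TopologicalSpace.PseudoMetrizableSpace X] [TopologicalSpace.SeparableSpace X]
    [MeasurableSpace X] [BorelSpace X]
    {f : X → ℝ≥0∞} (hf : LowerSemicontinuous f) :
    LowerSemicontinuous fun μ : ProbabilityMeasure X => ∫⁻ x, f x ∂(μ : Measure X) := by
  simp only [lintegral_eq_lintegral_Ioi_measure_ofReal_lt _ hf.measurable]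
  refine lowerSemicontinuous_lintegral (fun μ => Antitone.measurable fun s t hst => ?_) fun t => ?_
  · exact measure_mono fun x hx => (ENNReal.ofReal_le_ofReal hst).trans_lt hx
  · exact lowerSemicontinuous_iff_le_liminf.2 fun μ =>
      ProbabilityMeasure.le_liminf_measure_open_of_tendsto tendsto_id (hf.isOpen_preimage _)

theorem le_of_ae_le_of_mem_support {X γ : Type*} [TopologicalSpace X] [MeasurableSpace X]
    [LinearOrder γ] {μ : Measure X} {g : X → γ} (hg : LowerSemicontinuous g) {c : γ}
    (hgc : ∀ᵐ x ∂μ, g x ≤ c) {x : X} (hx : x ∈ μ.support) : g x ≤ c := by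
  by_contra! hlt
  refine ((Measure.mem_support_iff_forall x).1 hx _ (hg x c hlt)).ne' ?_
  simpa only [ae_iff, not_le] using hgc

theorem ae_le_of_lintegral_max_le {α : Type*} [MeasurableSpace α] {μ : Measure α}
    [IsProbabilityMeasure μ] {g : α → ℝ≥0∞} (hg : Measurable g) {c : ℝ≥0∞} (hc : c ≠ ⊤)
    (hle : ∫⁻ x, max c (g x) ∂μ ≤ c) : ∀ᵐ x ∂μ, g x ≤ c := by
  have hae : (fun _ => c) =ᵐ[μ] fun x => max c (g x) :=
    ae_eq_of_ae_le_of_lintegral_le (ae_of_all _ fun x => le_max_left _ _) (by simpa using hc)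
      (measurable_const.max hg).aemeasurable (by simpa using hle)
  exact hae.mono fun x hx => max_eq_left_iff.1 hx.symm

end LowerSemicontinuity

section EmpiricalMeasure

open ProbabilityTheory

variable {X : Type*} [MeasurableSpace X] {N : ℕ}

/-- The empirical measure `N⁻¹ ∑ δ_{ω i}` of a finite family of points. -/
def empiricalMeasure (ω : Fin N → X) : Measure X :=
  (N : ℝ≥0∞)⁻¹ • ∑ i, Measure.dirac (ω i)

instance [NeZero N] (ω : Fin N → X) : IsProbabilityMeasure (empiricalMeasure ω) where
  measure_univ := by
    simpa [empiricalMeasure] using ENNReal.inv_mul_cancel (NeZero.natCast_ne N ℝ≥0∞) (by simp)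

/-- The empirical measure of a nonempty finite family, as a point of the space of probability
measures with its weak topology. -/
def empiricalProba [NeZero N] (ω : Fin N → X) : ProbabilityMeasure X :=
  ⟨empiricalMeasure ω, inferInstance⟩

theorem lintegral_empiricalMeasure (ω : Fin N → X) {f : X → ℝ≥0∞} (hf : Measurable f) :
    ∫⁻ x, f x ∂empiricalMeasure ω = (N : ℝ≥0∞)⁻¹ * ∑ i, f (ω i) := by
  simp [empiricalMeasure, lintegral_finsetSum_measure, lintegral_dirac' _ hf]

theorem empiricalMeasure_compl_eq_zero {ω : Fin N → X} {A : Set X}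
    (hA : MeasurableSet A) (hω : ∀ i, ω i ∈ A) : empiricalMeasure ω Aᶜ = 0 := by
  simp [empiricalMeasure, Measure.dirac_apply' _ hA.compl, hω]

theorem empiricalMeasure_real_apply (ω : Fin N → X) {s : Set X} (hs : MeasurableSet s) :
    (empiricalMeasure ω).real s = (∑ i, s.indicator 1 (ω i)) / N := by
  have htop (x : X) : s.indicator (1 : X → ℝ≥0∞) x ≠ ∞ := by
    by_cases hx : x ∈ s <;> simp [hx]
  have htoReal (x : X) : (s.indicator (1 : X → ℝ≥0∞) x).toReal = s.indicator 1 x := by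
    by_cases hx : x ∈ s <;> simp [hx]
  rw [measureReal_def, ← lintegral_indicator_one hs,
    lintegral_empiricalMeasure _ (measurable_one.indicator hs), ENNReal.toReal_mul,
    ENNReal.toReal_sum fun i _ => htop (ω i), div_eq_inv_mul]
  simp [htoReal]

theorem ae_tendsto_empiricalMeasure_real_apply {Ω : Type*} [MeasurableSpace Ω] {P : Measure Ω}
    {μ : Measure X} [IsFiniteMeasure μ] {Y : ℕ → Ω → X} (hY : ∀ i, HasLaw (Y i) μ P)
    (hindep : Pairwise fun i j => Y i ⟂ᵢ[P] Y j) {s : Set X} (hs : MeasurableSet s) :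
    ∀ᵐ ω ∂P, Tendsto (fun N => (empiricalMeasure fun i : Fin N => Y i ω).real s) atTop
      (𝓝 (μ.real s)) := by
  have hφ : Measurable (s.indicator (1 : X → ℝ)) := measurable_one.indicator hs
  have hint : Integrable (s.indicator (1 : X → ℝ) ∘ Y 0) P :=
    Integrable.comp_aemeasurable (by
      rw [(hY 0).map_eq]; exact (integrable_const 1).indicator hs) (hY 0).aemeasurable
  have hmean : ∫ ω, s.indicator (1 : X → ℝ) (Y 0 ω) ∂P = μ.real s :=
    ((hY 0).integral_comp hφ.aestronglyMeasurable).trans (integral_indicator_one hs)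
  filter_upwards [strong_law_ae_real (fun i => s.indicator (1 : X → ℝ) ∘ Y i) hint
    (fun i j hij => (hindep hij).comp hφ hφ) fun i => ((hY i).identDistrib (hY 0)).comp hφ]
    with ω hω
  simpa only [empiricalMeasure_real_apply _ hs, Finset.sum_range, hmean,
    Function.comp_apply] using hω

theorem exists_countable_isPiSystem_nhds (X : Type*) [TopologicalSpace X]
    [SecondCountableTopology X] [MeasurableSpace X] [OpensMeasurableSpace X] :
    ∃ S : Set (Set X), S.Countable ∧ IsPiSystem S ∧ (∀ s ∈ S, MeasurableSet s) ∧
      ∀ U : Set X, IsOpen U → ∀ x ∈ U, ∃ s ∈ S, s ∈ 𝓝 x ∧ s ⊆ U := by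
  obtain ⟨B, hBcount, -, hB⟩ := TopologicalSpace.exists_countable_basis X
  refine ⟨generateSetAlgebra B, countable_generateSetAlgebra hBcount,
    fun s hs t ht _ => isSetAlgebra_generateSetAlgebra.inter_mem hs ht, fun s hs => ?_,
    fun U hU x hx => ?_⟩
  · have hgen : MeasurableSpace.generateFrom (generateSetAlgebra B) ≤ ‹MeasurableSpace X› := by
      rw [generateFrom_generateSetAlgebra_eq]
      exact MeasurableSpace.generateFrom_le fun u hu => (hB.isOpen hu).measurableSet
    exact hgen s (MeasurableSpace.measurableSet_generateFrom hs)
  · obtain ⟨u, hu, hxu, huU⟩ := hB.exists_subset_of_mem_open hx hU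
    exact ⟨u, self_subset_generateSetAlgebra hu, (hB.isOpen hu).mem_nhds hxu, huU⟩

theorem ae_tendsto_empiricalProba [TopologicalSpace X] [SecondCountableTopology X]
    [OpensMeasurableSpace X] {Ω : Type*} [MeasurableSpace Ω] {P : Measure Ω}
    {μ : ProbabilityMeasure X} {Y : ℕ → Ω → X} (hY : ∀ i, HasLaw (Y i) μ P)
    (hindep : Pairwise fun i j => Y i ⟂ᵢ[P] Y j) :
    ∀ᵐ ω ∂P, Tendsto (fun N => empiricalProba fun i : Fin (N + 1) => Y i ω) atTop (𝓝 μ) := by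
  obtain ⟨S, hScount, hSpi, hSmeas, hSnhds⟩ := exists_countable_isPiSystem_nhds X
  filter_upwards [(ae_ball_iff hScount).2 fun s hs =>
    ae_tendsto_empiricalMeasure_real_apply hY hindep (hSmeas s hs)] with ω hω
  exact hSpi.tendsto_probabilityMeasure_of_tendsto_of_mem hSmeas hSnhds fun s hs =>
    NNReal.tendsto_coe.1 ((tendsto_add_atTop_iff_nat 1).2 (hω s hs))

theorem exists_seq_tendsto_empiricalProba [TopologicalSpace X] [SecondCountableTopology X]
    [OpensMeasurableSpace X] (μ : ProbabilityMeasure X) {A : Set X}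
    (hA : ∀ᵐ x ∂(μ : Measure X), x ∈ A) :
    ∃ y : ℕ → X, (∀ i, y i ∈ A) ∧
      Tendsto (fun N => empiricalProba fun i : Fin (N + 1) => y i) atTop (𝓝 μ) := by
  obtain ⟨Ω, _, P, Y, -, hY, hindep, _⟩ := exists_iid ℕ (μ : Measure X)
  have hYA : ∀ᵐ ω ∂P, ∀ i, Y i ω ∈ A := ae_all_iff.2 fun i =>
    ae_of_ae_map (hY i).aemeasurable (by rwa [(hY i).map_eq])
  obtain ⟨ω, hω, hωA⟩ := ((ae_tendsto_empiricalProba hY fun i j hij =>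
    hindep.indepFun hij).and hYA).exists
  exact ⟨fun i => Y i ω, hωA, hω⟩

end EmpiricalMeasure

section KernelPotential

/-- The potential `U^μ(x) = ∫ K(x,y) dμ(y)` of a measure with respect to a general kernel. -/
def kernelPotential {X : Type*} [MeasurableSpace X] (K : X → X → ℝ≥0∞) (μ : Measure X) (x : X) :
    ℝ≥0∞ :=
  ∫⁻ y, K x y ∂μ

/-- The energy `I[μ] = ∫ U^μ dμ` of a measure with respect to a general kernel. -/
def kernelEnergy {X : Type*} [MeasurableSpace X] (K : X → X → ℝ≥0∞) (μ : Measure X) : ℝ≥0∞ :=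
  ∫⁻ x, kernelPotential K μ x ∂μ

/-- The polarization `inf_{x ∈ A} U^μ(x)` of an arbitrary measure; the polarization of a
configuration is that of its empirical measure. -/
def kernelPolarization {X : Type*} [MeasurableSpace X] (K : X → X → ℝ≥0∞) (A : Set X)
    (μ : Measure X) : ℝ≥0∞ :=
  ⨅ x ∈ A, kernelPotential K μ x

/-- The optimal polarization of `N` points of `A` with respect to a general kernel. -/
def kernelMaxPolarization {X : Type*} [MeasurableSpace X] (K : X → X → ℝ≥0∞) (A : Set X)
    (N : ℕ) : ℝ≥0∞ :=
  ⨆ (ω : Fin N → X) (_ : ∀ i, ω i ∈ A), kernelPolarization K A (empiricalMeasure ω)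

variable {X : Type*} [MeasurableSpace X] {K : X → X → ℝ≥0∞} {A : Set X}

theorem lintegral_kernelPotential_comm (hK : Measurable (Function.uncurry K))
    (hsymm : ∀ x y, K x y = K y x) (μ ν : Measure X) [SFinite μ] [SFinite ν] :
    ∫⁻ x, kernelPotential K ν x ∂μ = ∫⁻ x, kernelPotential K μ x ∂ν := by
  simp only [kernelPotential]
  rw [lintegral_lintegral_swap hK.aemeasurable]
  simp only [hsymm]

variable [TopologicalSpace X] [TopologicalSpace.PseudoMetrizableSpace X]
  [SecondCountableTopology X] [BorelSpace X]

theorem lowerSemicontinuous_kernelPotential_prod (hK : LowerSemicontinuous (Function.uncurry K)) :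
    LowerSemicontinuous fun p : ProbabilityMeasure X × X => kernelPotential K p.1 p.2 := by
  have hpot (p : ProbabilityMeasure X × X) : kernelPotential K p.1 p.2 =
      ∫⁻ q, Function.uncurry K q ∂((diracProba p.2).prod p.1 : Measure (X × X)) := by
    rw [ProbabilityMeasure.toMeasure_prod, lintegral_prod _ hK.measurable.aemeasurable]
    exact (lintegral_dirac' p.2 hK.measurable.lintegral_prod_right').symm
  simp only [hpot]
  exact (lowerSemicontinuous_lintegral_probabilityMeasure hK).comp
    (ProbabilityMeasure.continuous_prod.comp
      ((continuous_diracProba.comp continuous_snd).prodMk continuous_fst))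

theorem lowerSemicontinuous_kernelPotential (hK : LowerSemicontinuous (Function.uncurry K))
    (μ : Measure X) : LowerSemicontinuous (kernelPotential K μ) :=
  lowerSemicontinuous_lintegral (fun _ => hK.measurable.of_uncurry_left)
    fun y => hK.comp (Continuous.prodMk_left y)

theorem lowerSemicontinuous_kernelPotential_left (hK : LowerSemicontinuous (Function.uncurry K))
    (x : X) : LowerSemicontinuous fun μ : ProbabilityMeasure X => kernelPotential K μ x :=
  (lowerSemicontinuous_kernelPotential_prod hK).comp (Continuous.prodMk_left x)

theorem lowerSemicontinuous_kernelPolarization (hK : LowerSemicontinuous (Function.uncurry K))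
    (hA : IsCompact A) :
    LowerSemicontinuous fun μ : ProbabilityMeasure X => kernelPolarization K A μ :=
  lowerSemicontinuous_biInf_of_isCompact (lowerSemicontinuous_kernelPotential_prod hK) hA

theorem kernelPolarization_le_liminf_kernelMaxPolarization
    (hK : LowerSemicontinuous (Function.uncurry K)) (hA : IsCompact A) {μ : Measure X}
    [IsProbabilityMeasure μ] (hμA : ∀ᵐ x ∂μ, x ∈ A) :
    kernelPolarization K A μ ≤ liminf (kernelMaxPolarization K A) atTop := by
  obtain ⟨y, hyA, hy⟩ := exists_seq_tendsto_empiricalProba ⟨μ, ‹_›⟩ hμA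
  rw [← liminf_nat_add (kernelMaxPolarization K A) 1]
  calc kernelPolarization K A μ
      ≤ liminf (fun N => kernelPolarization K A
          (empiricalProba fun i : Fin (N + 1) => y i : ProbabilityMeasure X)) atTop :=
        ((lowerSemicontinuous_kernelPolarization hK hA).le_liminf _).trans
          hy.liminf_le_liminf_comp
    _ ≤ liminf (fun N => kernelMaxPolarization K A (N + 1)) atTop :=
        liminf_le_liminf (Eventually.of_forall fun N => le_iSup₂_of_le _ (fun i => hyA i) le_rfl)

theorem kernelPotential_le_of_le_liminf_kernelPolarization {ι : Type*} {L : Filter ι}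
    [L.IsCountablyGenerated] [L.NeBot] {P : ι → ProbabilityMeasure X} {ν : ProbabilityMeasure X}
    {μ : Measure X} [IsProbabilityMeasure μ] {W : ℝ≥0∞}
    (hK : LowerSemicontinuous (Function.uncurry K)) (hsymm : ∀ x y, K x y = K y x)
    (hμA : ∀ᵐ x ∂μ, x ∈ A) (hWtop : W ≠ ⊤) (hW : ∀ x ∈ A, kernelPotential K μ x ≤ W)
    (hPA : ∀ i, ∀ᵐ x ∂(P i : Measure X), x ∈ A) (hP : Tendsto P L (𝓝 ν))
    (hpol : W ≤ liminf (fun i => kernelPolarization K A (P i)) L) {x : X} (hx : x ∈ μ.support) :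
    kernelPotential K ν x ≤ W := by
  have hUν : LowerSemicontinuous (kernelPotential K ν) := lowerSemicontinuous_kernelPotential hK ν
  have hlower : ∀ᵐ x ∂μ, max W (kernelPotential K ν x) ≤
      liminf (fun i => kernelPotential K (P i) x) L := hμA.mono fun x hx =>
    max_le (hpol.trans (liminf_le_liminf (Eventually.of_forall fun i => iInf₂_le x hx)))
      (((lowerSemicontinuous_kernelPotential_left hK x).le_liminf ν).trans
        hP.liminf_le_liminf_comp)
  have hupper : ∫⁻ x, max W (kernelPotential K ν x) ∂μ ≤ W :=
    calc ∫⁻ x, max W (kernelPotential K ν x) ∂μ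
        ≤ ∫⁻ x, liminf (fun i => kernelPotential K (P i) x) L ∂μ := lintegral_mono_ae hlower
      _ ≤ liminf (fun i => ∫⁻ x, kernelPotential K (P i) x ∂μ) L :=
        lintegral_liminf_le fun i => (lowerSemicontinuous_kernelPotential hK _).measurable
      _ = liminf (fun i => ∫⁻ x, kernelPotential K μ x ∂(P i)) L := by
        simp only [lintegral_kernelPotential_comm hK.measurable hsymm μ]
      _ ≤ liminf (fun _ => W) L := liminf_le_liminf (Eventually.of_forall fun i =>
        lintegral_le_const ((hPA i).mono hW))
      _ = W := liminf_const W
  exact le_of_ae_le_of_mem_support hUν (ae_le_of_lintegral_max_le hUν.measurable hWtop hupper) hx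

end KernelPotential

section Equidistribution

variable {X : Type*} [MeasurableSpace X] [TopologicalSpace X]
  [TopologicalSpace.MetrizableSpace X] [BorelSpace X] {A : Set X}

theorem isCompact_setOf_ae_mem_probabilityMeasure (hA : IsCompact A) :
    IsCompact {P : ProbabilityMeasure X | ∀ᵐ x ∂(P : Measure X), x ∈ A} := by
  convert isCompact_setOfPred_probabilityMeasure_mass_eq_compl_isCompact_le (E := X)
    (tendsto_const_nhds (x := (0 : ℝ≥0))) (fun _ => hA) (Or.inr monotone_const) using 1
  ext P
  simp [ae_iff, ← Set.compl_def]

variable [SecondCountableTopology X] {K : X → X → ℝ≥0∞} {μ : ProbabilityMeasure X}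

theorem tendsto_of_kernelEnergy_le_liminf_kernelPolarization {ι : Type*} {L : Filter ι}
    [L.IsCountablyGenerated] {P : ι → ProbabilityMeasure X}
    (hA : IsCompact A) (hK : LowerSemicontinuous (Function.uncurry K))
    (hsymm : ∀ x y, K x y = K y x) (hμA : ∀ᵐ x ∂(μ : Measure X), x ∈ A)
    (hsupp : A ⊆ (μ : Measure X).support) (hfin : kernelEnergy K μ ≠ ⊤)
    (huniq : ∀ ν : ProbabilityMeasure X, (∀ᵐ x ∂(ν : Measure X), x ∈ A) →
      kernelEnergy K ν ≤ kernelEnergy K μ → ν = μ)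
    (hpot : ∀ x ∈ A, kernelPotential K μ x ≤ kernelEnergy K μ)
    (hPA : ∀ i, ∀ᵐ x ∂(P i : Measure X), x ∈ A)
    (hpol : kernelEnergy K μ ≤ liminf (fun i => kernelPolarization K A (P i)) L) :
    Tendsto P L (𝓝 μ) := by
  refine (isCompact_setOf_ae_mem_probabilityMeasure hA).tendsto_nhds_of_unique_mapClusterPt
    (Eventually.of_forall hPA) fun ν (hν : ∀ᵐ x ∂(ν : Measure X), x ∈ A) hcluster => huniq ν hν ?_
  refine lintegral_le_const (hν.mono fun x hx => ?_)
  have : NeBot (comap P (𝓝 ν) ⊓ L) := neBot_inf_comap_iff_map'.2 hcluster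
  exact kernelPotential_le_of_le_liminf_kernelPolarization (L := comap P (𝓝 ν) ⊓ L) hK hsymm
    hμA hfin hpot hPA (tendsto_comap.mono_left inf_le_left)
    (hpol.trans (liminf_le_liminf_of_le inf_le_right)) (hsupp hx)

end Equidistribution

section DistanceKernel

variable {t : ℕ} {f : ℝ≥0 → ℝ≥0∞}

theorem lowerSemicontinuous_comp_nndist {X : Type*} [PseudoMetricSpace X]
    (hf : LowerSemicontinuous f) :
    LowerSemicontinuous (Function.uncurry fun x y : X => f (nndist x y)) :=
  hf.comp continuous_nndist

theorem polarization_eq_kernelPolarization (hf : Measurable f)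
    (A : Set (EuclideanSpace ℝ (Fin t))) {N : ℕ} (ω : Fin N → EuclideanSpace ℝ (Fin t)) :
    polarization f A ω =
      kernelPolarization (fun x y => f (nndist x y)) A (empiricalMeasure ω) := by
  have hpot (x : EuclideanSpace ℝ (Fin t)) : discretePotential f ω x =
      kernelPotential (fun x y => f (nndist x y)) (empiricalMeasure ω) x :=
    (lintegral_empiricalMeasure ω (hf.comp (by fun_prop))).symm
  simp only [polarization, kernelPolarization, hpot]

theorem maxPolarization_eq_kernelMaxPolarization (hf : Measurable f)
    (A : Set (EuclideanSpace ℝ (Fin t))) (N : ℕ) :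
    maxPolarization f A N = kernelMaxPolarization (fun x y => f (nndist x y)) A N := by
  simp only [maxPolarization, kernelMaxPolarization, polarization_eq_kernelPolarization hf]

end DistanceKernel

theorem optimal_configurations_equidistribute_general {X : Type*} [MeasurableSpace X]
    [TopologicalSpace X] [TopologicalSpace.MetrizableSpace X] [SecondCountableTopology X]
    [BorelSpace X] {A : Set X} {K : X → X → ℝ≥0∞} {μ : ProbabilityMeasure X}
    (hA : IsCompact A) (hK : LowerSemicontinuous (Function.uncurry K))
    (hsymm : ∀ x y, K x y = K y x) (hμA : ∀ᵐ x ∂(μ : Measure X), x ∈ A)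
    (hsupp : A ⊆ (μ : Measure X).support) (hfin : kernelEnergy K μ ≠ ⊤)
    (huniq : ∀ ν : ProbabilityMeasure X, (∀ᵐ x ∂(ν : Measure X), x ∈ A) →
      kernelEnergy K ν ≤ kernelEnergy K μ → ν = μ)
    {W : ℝ≥0∞} (hpot : ∀ x ∈ A, kernelPotential K μ x = W)
    {ω : (N : ℕ) → Fin N → X} (hω : ∀ N i, ω N i ∈ A)
    (hopt : liminf (kernelMaxPolarization K A) atTop ≤
      liminf (fun N => kernelPolarization K A (empiricalMeasure (ω N))) atTop) :
    ∀ g : X →ᵇ ℝ, Tendsto (fun N => ∫ x, g x ∂empiricalMeasure (ω N)) atTop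
      (𝓝 (∫ x, g x ∂(μ : Measure X))) := by
  obtain rfl : kernelEnergy K μ = W := lintegral_eq_const (hμA.mono hpot)
  suffices Tendsto (fun N => empiricalProba (ω (N + 1))) atTop (𝓝 μ) from fun g =>
    (tendsto_add_atTop_iff_nat 1).1
      (ProbabilityMeasure.tendsto_iff_forall_integral_tendsto.1 this g)
  refine tendsto_of_kernelEnergy_le_liminf_kernelPolarization hA hK hsymm hμA hsupp hfin huniq
    (fun x hx => (hpot x hx).le)
    (fun N => empiricalMeasure_compl_eq_zero hA.measurableSet (hω (N + 1))) ?_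
  calc kernelEnergy K μ ≤ kernelPolarization K A μ := le_iInf₂ fun x hx => (hpot x hx).ge
    _ ≤ liminf (kernelMaxPolarization K A) atTop :=
      kernelPolarization_le_liminf_kernelMaxPolarization hK hA hμA
    _ ≤ liminf (fun N => kernelPolarization K A (empiricalMeasure (ω N))) atTop := hopt
    _ = liminf (fun N => kernelPolarization K A (empiricalMeasure (ω (N + 1)))) atTop :=
      (liminf_nat_add _ 1).symm

theorem optimal_configurations_equidistribute
    {t : ℕ} (A : Set (EuclideanSpace ℝ (Fin t))) (hA : IsCompact A)
    (f : ℝ≥0 → ℝ≥0∞) (hf : LowerSemicontinuous f)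
    (μeq : Measure (EuclideanSpace ℝ (Fin t))) (hμeq : IsProbabilityMeasure μeq)
    (hμeqA : μeq Aᶜ = 0)
    (hA1 : ∃ μ : Measure (EuclideanSpace ℝ (Fin t)),
      IsProbabilityMeasure μ ∧ μ Aᶜ = 0 ∧ energy f μ < ⊤)
    (hA2min : ∀ ν : Measure (EuclideanSpace ℝ (Fin t)),
      IsProbabilityMeasure ν → ν Aᶜ = 0 → energy f μeq ≤ energy f ν)
    (hA2uniq : ∀ ν : Measure (EuclideanSpace ℝ (Fin t)),
      IsProbabilityMeasure ν → ν Aᶜ = 0 → energy f ν = energy f μeq → ν = μeq)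
    (hA3 : ∀ x ∈ A, ∀ U : Set (EuclideanSpace ℝ (Fin t)), IsOpen U → x ∈ U → 0 < μeq U)
    (W : ℝ≥0∞) (hW : 0 < W) (hA4 : ∀ x ∈ A, potential f μeq x = W)
    (ω : (N : ℕ) → Fin N → EuclideanSpace ℝ (Fin t)) (hω : ∀ N, ∀ i, ω N i ∈ A)
    (hopt : ∀ N, polarization f A (ω N) = maxPolarization f A N) :
    WeaklyTendsto (fun N => countingMeasure (ω N)) μeq := by
  obtain ⟨σ, hσ, hσA, hσfin⟩ := hA1
  exact optimal_configurations_equidistribute_general (μ := ⟨μeq, hμeq⟩) hA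
    (lowerSemicontinuous_comp_nndist hf) (fun x y => congrArg f (nndist_comm x y)) hμeqA
    (fun x hx => (nhds_basis_opens x).mem_measureSupport.2 fun U hU =>
      hA3 x hx U hU.2 hU.1)
    ((hA2min σ hσ hσA).trans_lt hσfin).ne
    (fun ν hνA hν => Subtype.ext <|
      hA2uniq ν inferInstance hνA (le_antisymm hν (hA2min ν inferInstance hνA)))
    hA4 hω (by simp only [← polarization_eq_kernelPolarization hf.measurable,
      ← funext (maxPolarization_eq_kernelMaxPolarization hf.measurable A), hopt, le_refl])
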